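/- Remote contiguity from total variation convergence and moment bounds: let ν_{0,k} and μ₀ be probability measures on 𝔅ᵈ with the same support and continuous Lebesgue densities p_{0,k}, m₀ such that sup_A |ν_{0,k}(A) − μ₀(A)| → 0. Let S_k = Σ_{i=1}^k log(p_{0,k}(Z^{(i,k)})/m₀(Z^{(i,k)})) with Z^{(i,k)} i.i.d. ~ ν_{0,k}. If the first two moments η_{1,k}, η_{2,k} of the log-ratio tend to 0 and its fourth moment is uniformly bounded, then for every ε > 0, P(S_k > εk) = o(k^{−2}); consequently, if E_k are events with μ₀^k(E_k) = o(e^{−ck}) for some c > 0, then ν_{0,k}^k(E_k) = o(k^{−2}). -/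

import Mathlib

/-!
Under the product measure `ν_k^k` the log-likelihood ratio `S_k = ∑ log (p_k / m)(Z_i)` is a sum of
`k` i.i.d. terms. For centered i.i.d. terms with variance `v` and fourth moment `M`, expanding the
fourth power gives `E T_k^4 ≤ k M + 3 k² v²` (`sum_fourth_moment`). Markov's inequality
then bounds `k² P(S_k > ε k)` by a constant times `M / k + v²` as soon as the mean is below `ε / 2`
(`pi_tail_bound`). This tends to `0` because `M` stays bounded and `v → 0`: the vanishing second
moment is what improves `O(k⁻²)` to `o(k⁻²)`.

For the second claim, the common support gives `ν_k = (p_k / m) μ`, hence `ν_k^k` has density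
`∏ (p_k / m)(z_i)` with respect to `μ^k` (`pi_withDensity`). This density is at most `e^{ε k}` where
`S_k ≤ ε k`, so `ν_k^k(E) ≤ e^{ε k} μ^k(E) + ν_k^k(S_k > ε k)` (`pi_change_of_measure`), used with
`ε = c / 2`.
-/

open MeasureTheory Filter

open ProbabilityTheory

open scoped ENNReal

lemma integrable_pow_of_memLp_four {Ω : Type*} [MeasurableSpace Ω] {P : Measure Ω}
    [IsProbabilityMeasure P] {X : Ω → ℝ} (hX : MemLp X 4 P) {j : ℕ} (hj : j ≤ 4) :
    Integrable (fun ω => X ω ^ j) P := by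
  have h : MemLp X j P := hX.mono_exponent (by exact_mod_cast hj)
  refine (h.integrable_norm_pow').mono' (h.aestronglyMeasurable.pow j) ?_
  exact Eventually.of_forall fun ω => by simp [norm_pow]

/-- Second and fourth moments of the sum of two independent centered variables; all terms that
contain a first power integrate to zero. -/
lemma moments_add {Ω : Type*} [MeasurableSpace Ω] {P : Measure Ω}
    [IsProbabilityMeasure P] {T X : Ω → ℝ} (hT : MemLp T 4 P) (hX : MemLp X 4 P)
    (hTX : IndepFun T X P) (hT0 : ∫ ω, T ω ∂P = 0) (hX0 : ∫ ω, X ω ∂P = 0) :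
    ∫ ω, (T ω + X ω) ^ 2 ∂P = ∫ ω, T ω ^ 2 ∂P + ∫ ω, X ω ^ 2 ∂P ∧
    ∫ ω, (T ω + X ω) ^ 4 ∂P = ∫ ω, T ω ^ 4 ∂P
      + 6 * ((∫ ω, T ω ^ 2 ∂P) * ∫ ω, X ω ^ 2 ∂P) + ∫ ω, X ω ^ 4 ∂P := by
  have iT : ∀ j ≤ 4, Integrable (fun ω => T ω ^ j) P :=
    fun j hj => integrable_pow_of_memLp_four hT hj
  have iX : ∀ j ≤ 4, Integrable (fun ω => X ω ^ j) P :=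
    fun j hj => integrable_pow_of_memLp_four hX hj
  have ind : ∀ i j : ℕ, IndepFun (fun ω => T ω ^ i) (fun ω => X ω ^ j) P := fun i j =>
    hTX.comp (φ := fun x : ℝ => x ^ i) (ψ := fun x : ℝ => x ^ j) (by fun_prop) (by fun_prop)
  have iTX : ∀ i ≤ 4, ∀ j ≤ 4, Integrable (fun ω => T ω ^ i * X ω ^ j) P :=
    fun i hi j hj => (ind i j).integrable_mul (iT i hi) (iX j hj)
  have eTX : ∀ i ≤ 4, ∀ j ≤ 4,
      ∫ ω, T ω ^ i * X ω ^ j ∂P = (∫ ω, T ω ^ i ∂P) * ∫ ω, X ω ^ j ∂P :=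
    fun i hi j hj => (ind i j).integral_fun_mul_eq_mul_integral
      (iT i hi).aestronglyMeasurable (iX j hj).aestronglyMeasurable
  have hT1 : ∫ ω, T ω ^ 1 ∂P = 0 := by simpa using hT0
  have hX1 : ∫ ω, X ω ^ 1 ∂P = 0 := by simpa using hX0
  have iT2 := iT 2 (by norm_num)
  have iT4 := iT 4 (by norm_num)
  have iX2 := iX 2 (by norm_num)
  have iX4 := iX 4 (by norm_num)
  have i11 := (iTX 1 (by norm_num) 1 (by norm_num)).const_mul 2
  have i31 := (iTX 3 (by norm_num) 1 (by norm_num)).const_mul 4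
  have i22 := (iTX 2 (by norm_num) 2 (by norm_num)).const_mul 6
  have i13 := (iTX 1 (by norm_num) 3 (by norm_num)).const_mul 4
  constructor
  · have : ∀ ω, (T ω + X ω) ^ 2 = T ω ^ 2 + 2 * (T ω ^ 1 * X ω ^ 1) + X ω ^ 2 := fun ω => by ring
    simp_rw [this]
    rw [integral_add (iT2.fun_add i11) iX2, integral_add iT2 i11, integral_const_mul,
      eTX 1 (by norm_num) 1 (by norm_num), hT1]
    ring
  · have : ∀ ω, (T ω + X ω) ^ 4 = T ω ^ 4 + 4 * (T ω ^ 3 * X ω ^ 1) + 6 * (T ω ^ 2 * X ω ^ 2)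
        + 4 * (T ω ^ 1 * X ω ^ 3) + X ω ^ 4 := fun ω => by ring
    simp_rw [this]
    rw [integral_add (((iT4.fun_add i31).fun_add i22).fun_add i13) iX4,
      integral_add ((iT4.fun_add i31).fun_add i22) i13, integral_add (iT4.fun_add i31) i22,
      integral_add iT4 i31, integral_const_mul, integral_const_mul, integral_const_mul,
      eTX 3 (by norm_num) 1 (by norm_num), eTX 2 (by norm_num) 2 (by norm_num),
      eTX 1 (by norm_num) 3 (by norm_num), hT1, hX1]
    ring

/-- Fourth-moment bound for sums of independent centered variables with common second moment `v`
and fourth moment `M`. The exact second moment is carried along because it enters the induction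
step for the fourth one; `MemLp` provides the integrability that Markov's inequality requires. -/
lemma sum_fourth_moment {Ω ι : Type*} [MeasurableSpace Ω] {P : Measure Ω}
    [IsProbabilityMeasure P] {X : ι → Ω → ℝ} (hX : ∀ i, MemLp (X i) 4 P)
    (hind : iIndepFun X P) (hX0 : ∀ i, ∫ ω, X i ω ∂P = 0) {v M : ℝ}
    (hv : ∀ i, ∫ ω, X i ω ^ 2 ∂P = v) (hM : ∀ i, ∫ ω, X i ω ^ 4 ∂P = M) (s : Finset ι) :
    MemLp (fun ω => ∑ i ∈ s, X i ω) 4 P ∧ ∫ ω, ∑ i ∈ s, X i ω ∂P = 0 ∧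
    ∫ ω, (∑ i ∈ s, X i ω) ^ 2 ∂P = s.card * v ∧
    ∫ ω, (∑ i ∈ s, X i ω) ^ 4 ∂P ≤ s.card * M + 3 * (s.card : ℝ) ^ 2 * v ^ 2 := by
  classical
  have hmem : ∀ s : Finset ι, MemLp (fun ω => ∑ i ∈ s, X i ω) 4 P :=
    fun s => memLp_finsetSum s fun i _ => hX i
  have hmean : ∀ s : Finset ι, ∫ ω, ∑ i ∈ s, X i ω ∂P = 0 := fun s => by
    rw [integral_finsetSum s fun i _ => (hX i).integrable (by norm_num)]
    simp [hX0]
  refine ⟨hmem s, hmean s, ?_⟩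
  induction s using Finset.induction_on with
  | empty => simp
  | insert a s ha ih =>
    have hi : IndepFun (fun ω => ∑ i ∈ s, X i ω) (X a) P := by
      have := hind.indepFun_finsetSum_of_notMem₀ (fun i => (hX i).aestronglyMeasurable.aemeasurable)
        ha
      convert this using 1
      ext ω
      simp
    obtain ⟨h2, h4⟩ := moments_add (hmem s) (hX a) hi (hmean s) (hX0 a)
    obtain ⟨ih2, ih4⟩ := ih
    simp_rw [Finset.sum_insert ha, add_comm (X a _)]
    rw [h2, h4, ih2, hv, hM, Finset.card_insert_of_notMem ha]
    push_cast
    refine ⟨by ring, ?_⟩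
    nlinarith [sq_nonneg v]

/-- Markov's inequality for the fourth power of the centered sum. The centered second and fourth
moments are replaced by uncentered ones through `Var ≤ E f²` and `(a - b)^4 ≤ 8 (a^4 + b^4)`. -/
lemma pi_tail_bound {α : Type*} [MeasurableSpace α] (ν : Measure α) [IsProbabilityMeasure ν]
    {f : α → ℝ} (hf : Measurable f) (hint : Integrable (fun x => f x ^ 4) ν) {ε C : ℝ}
    (hC : ∫ x, f x ^ 4 ∂ν ≤ C)
    (hε : 0 < ε) (hη : ∫ x, f x ∂ν ≤ ε / 2) {n : ℕ} (hn : 0 < n) :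
    (n : ℝ) ^ 2 * ((Measure.pi fun _ : Fin n => ν) {z | ε * n < ∑ i, f (z i)}).toReal ≤
      16 / ε ^ 4 * (8 * (C + (∫ x, f x ∂ν) ^ 4) * (n : ℝ)⁻¹ + 3 * (∫ x, f x ^ 2 ∂ν) ^ 2) := by
  set η := ∫ x, f x ∂ν with hηdef
  set Q := Measure.pi fun _ : Fin n => ν
  have hf4 : MemLp f 4 ν := by
    have h := (integrable_norm_rpow_iff (μ := ν) (p := 4) hf.aestronglyMeasurable
      (by norm_num) (by norm_num)).1
    apply h
    refine hint.congr (Eventually.of_forall fun x => ?_)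
    have : ((4 : ℝ≥0∞).toReal) = ((4 : ℕ) : ℝ) := by norm_num
    simp only [this, Real.rpow_natCast, Real.norm_eq_abs]
    exact (Even.pow_abs (by decide) _).symm
  have i1 : Integrable f ν := hf4.integrable (by norm_num)
  have i2 : Integrable (fun x => f x ^ 2) ν := integrable_pow_of_memLp_four hf4 (by norm_num)
  set g : α → ℝ := fun x => f x - η with hg
  have hgm : Measurable g := hf.sub_const η
  have hg4 : MemLp g 4 ν := hf4.sub (memLp_const η)
  have hg0 : ∫ x, g x ∂ν = 0 := by
    rw [hg, integral_sub i1 (integrable_const _)]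
    simp [hηdef]
  have hgv : ∫ x, g x ^ 2 ∂ν ≤ ∫ x, f x ^ 2 ∂ν := by
    have : ∀ x, g x ^ 2 = f x ^ 2 - 2 * η * f x + η ^ 2 := fun x => by simp only [hg]; ring
    have i3 : Integrable (fun x => f x ^ 2 - 2 * η * f x) ν := i2.sub (i1.const_mul _)
    simp_rw [this]
    rw [integral_add i3 (integrable_const _),
      integral_sub i2 (i1.const_mul (2 * η)), integral_const_mul, ← hηdef]
    simp only [integral_const, probReal_univ, one_smul]
    nlinarith [sq_nonneg η]
  have hgM : ∫ x, g x ^ 4 ∂ν ≤ 8 * (C + η ^ 4) := by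
    have h : ∫ x, g x ^ 4 ∂ν ≤ ∫ x, 8 * (f x ^ 4 + η ^ 4) ∂ν := by
      refine integral_mono (integrable_pow_of_memLp_four hg4 le_rfl)
        ((hint.add (integrable_const _)).const_mul 8) fun x => ?_
      have h1 : (f x - η) ^ 2 ≤ 2 * (f x ^ 2 + η ^ 2) := by nlinarith [sq_nonneg (f x + η)]
      have h2 : ((f x - η) ^ 2) ^ 2 ≤ (2 * (f x ^ 2 + η ^ 2)) ^ 2 := by gcongr
      show (f x - η) ^ 4 ≤ 8 * (f x ^ 4 + η ^ 4)
      nlinarith [sq_nonneg (f x ^ 2 - η ^ 2)]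
    rw [integral_const_mul, integral_add hint (integrable_const _)] at h
    simp only [integral_const, probReal_univ, one_smul] at h
    linarith
  have hmp : ∀ i : Fin n, MeasurePreserving (fun z : Fin n → α => z i) Q ν :=
    fun i => measurePreserving_eval (fun _ => ν) i
  have key := (sum_fourth_moment (P := Q) (X := fun i z => g (z i))
    (fun i => hg4.comp_measurePreserving (hmp i))
    (iIndepFun_pi fun _ => hgm.aemeasurable)
    (fun i => by
      rw [← hg0]; exact integral_comp_eval (μ := fun _ : Fin n => ν) hgm.aestronglyMeasurable)
    (v := ∫ x, g x ^ 2 ∂ν) (M := ∫ x, g x ^ 4 ∂ν)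
    (fun i => integral_comp_eval (μ := fun _ : Fin n => ν) (f := fun x => g x ^ 2)
      (hgm.pow_const 2).aestronglyMeasurable)
    (fun i => integral_comp_eval (μ := fun _ : Fin n => ν) (f := fun x => g x ^ 4)
      (hgm.pow_const 4).aestronglyMeasurable) Finset.univ)
  obtain ⟨hS, -, -, h4⟩ := key
  rw [Finset.card_fin] at h4
  have hn' : (0 : ℝ) < n := by exact_mod_cast hn
  have markov := mul_meas_ge_le_integral_of_nonneg (μ := Q)
    (f := fun z => (∑ i, g (z i)) ^ 4)
    (Eventually.of_forall fun z => (by positivity : (0 : ℝ) ≤ (∑ i, g (z i)) ^ 4))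
    (integrable_pow_of_memLp_four hS le_rfl) ((ε * n / 2) ^ 4)
  have hsub : {z : Fin n → α | ε * n < ∑ i, f (z i)} ⊆
      {z | (ε * n / 2) ^ 4 ≤ (∑ i, g (z i)) ^ 4} := by
    intro z hz
    simp only [Set.mem_ofPred_eq] at hz ⊢
    have : ∑ i, g (z i) = ∑ i, f (z i) - n * η := by simp [hg, Finset.sum_sub_distrib]
    apply pow_le_pow_left₀ (by positivity)
    rw [this]
    nlinarith
  have hle : (Q {z | ε * n < ∑ i, f (z i)}).toReal ≤
      Q.real {z | (ε * n / 2) ^ 4 ≤ (∑ i, g (z i)) ^ 4} :=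
    measureReal_mono hsub
  have hv0 : 0 ≤ ∫ x, g x ^ 2 ∂ν := integral_nonneg fun x => sq_nonneg _
  have hvv : (∫ x, g x ^ 2 ∂ν) ^ 2 ≤ (∫ x, f x ^ 2 ∂ν) ^ 2 := by gcongr
  have hfin : (ε * n / 2) ^ 4 * (Q {z | ε * n < ∑ i, f (z i)}).toReal ≤
      n * (8 * (C + η ^ 4)) + 3 * (n : ℝ) ^ 2 * (∫ x, f x ^ 2 ∂ν) ^ 2 := by
    calc _ ≤ (ε * n / 2) ^ 4 * Q.real {z | (ε * n / 2) ^ 4 ≤ (∑ i, g (z i)) ^ 4} := by gcongr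
      _ ≤ _ := markov
      _ ≤ _ := h4
      _ ≤ _ := by gcongr
  generalize (Q {z | ε * n < ∑ i, f (z i)}).toReal = q at hfin ⊢
  have e1 : (n : ℝ) ^ 2 * q = 16 / (ε ^ 4 * n ^ 2) * ((ε * n / 2) ^ 4 * q) := by
    field_simp
    ring
  rw [e1]
  refine (mul_le_mul_of_nonneg_left hfin (by positivity)).trans (le_of_eq ?_)
  field_simp

/-- A finite power of a measure with density `g` has the product density. -/
lemma pi_withDensity {α : Type*} [MeasurableSpace α] (μ : Measure α) [IsProbabilityMeasure μ]
    {g : α → ℝ≥0∞} (hg : Measurable g) [IsProbabilityMeasure (μ.withDensity g)] (n : ℕ) :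
    (Measure.pi fun _ : Fin n => μ.withDensity g) =
      (Measure.pi fun _ : Fin n => μ).withDensity fun z => ∏ i, g (z i) := by
  refine Measure.pi_eq fun s hs => ?_
  rw [withDensity_apply _ (MeasurableSet.univ_pi hs),
    ← lintegral_indicator (MeasurableSet.univ_pi hs)]
  have h1 : ∀ z : Fin n → α, (Set.univ.pi s).indicator (fun z => ∏ i, g (z i)) z =
      ∏ i, (s i).indicator g (z i) := by
    intro z
    by_cases hz : z ∈ Set.univ.pi s
    · rw [Set.indicator_of_mem hz]
      exact Finset.prod_congr rfl fun i _ => (Set.indicator_of_mem (hz i trivial) g).symm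
    · rw [Set.indicator_of_notMem hz]
      simp only [Set.mem_pi, Set.mem_univ, true_imp_iff, not_forall] at hz
      obtain ⟨i, hi⟩ := hz
      exact (Finset.prod_eq_zero (Finset.mem_univ i) (Set.indicator_of_notMem hi g)).symm
  simp_rw [h1]
  have hm : ∀ i, Measurable ((s i).indicator g) := fun i => hg.indicator (hs i)
  rw [lintegral_prod_eq_prod_lintegral_of_indepFun Finset.univ
    (fun i (z : Fin n → α) => (s i).indicator g (z i))
    (iIndepFun_pi (X := fun i => (s i).indicator g) fun i => (hm i).aemeasurable)
    (fun i => (hm i).comp (measurable_pi_apply i))]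
  refine Finset.prod_congr rfl fun i _ => ?_
  rw [withDensity_apply _ (hs i), ← lintegral_indicator (hs i)]
  exact (measurePreserving_eval (fun _ : Fin n => μ) i).lintegral_comp (hm i)

/-- Change of measure from the power of `r μ` to the power of `μ`, split according to whether the
log-likelihood ratio exceeds `a`. Where some factor `r (z i)` vanishes the junk value of `Real.log`
is harmless, since the product density is then `0`. -/
lemma pi_change_of_measure {α : Type*} [MeasurableSpace α] (μ : Measure α) [IsProbabilityMeasure μ]
    {r : α → ℝ} (hr : Measurable r) (hr0 : ∀ x, 0 ≤ r x)
    [IsProbabilityMeasure (μ.withDensity fun x => ENNReal.ofReal (r x))] {n : ℕ}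
    {E : Set (Fin n → α)} (hE : MeasurableSet E) (a : ℝ) :
    ((Measure.pi fun _ : Fin n => μ.withDensity fun x => ENNReal.ofReal (r x)) E).toReal ≤
      Real.exp a * ((Measure.pi fun _ : Fin n => μ) E).toReal +
      ((Measure.pi fun _ : Fin n => μ.withDensity fun x => ENNReal.ofReal (r x))
        {z | a < ∑ i, Real.log (r (z i))}).toReal := by
  set Q := Measure.pi fun _ : Fin n => μ.withDensity fun x => ENNReal.ofReal (r x) with hQ
  set R := Measure.pi fun _ : Fin n => μ with hR
  have hQR : Q = R.withDensity fun z => ∏ i, ENNReal.ofReal (r (z i)) :=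
    pi_withDensity μ hr.ennreal_ofReal n
  set B := {z : Fin n → α | a < ∑ i, Real.log (r (z i))} with hB
  have hBm : MeasurableSet B := measurableSet_lt measurable_const <|
    Finset.measurable_sum _ fun i _ => (hr.comp (measurable_pi_apply i)).log
  have hdens : ∀ z ∈ E \ B, ∏ i, ENNReal.ofReal (r (z i)) ≤ ENNReal.ofReal (Real.exp a) := by
    intro z hz
    rw [← ENNReal.ofReal_prod_of_nonneg fun i _ => hr0 _]
    apply ENNReal.ofReal_le_ofReal
    by_cases h : ∃ i, r (z i) = 0
    · obtain ⟨i, hi⟩ := h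
      rw [Finset.prod_eq_zero (Finset.mem_univ i) hi]
      positivity
    · push Not at h
      have hlog : Real.log (∏ i, r (z i)) ≤ a := by
        rw [Real.log_prod fun i _ => h i]
        exact not_lt.1 hz.2
      exact (Real.log_le_iff_le_exp (Finset.prod_pos fun i _ => (hr0 _).lt_of_ne' (h i))).1 hlog
  have hdiff : Q (E \ B) ≤ ENNReal.ofReal (Real.exp a) * R E := by
    rw [hQR, withDensity_apply _ (hE.diff hBm)]
    calc _ ≤ ∫⁻ _z in E \ B, ENNReal.ofReal (Real.exp a) ∂ R :=
          setLIntegral_mono measurable_const hdens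
      _ = ENNReal.ofReal (Real.exp a) * R (E \ B) := by simp
      _ ≤ _ := by gcongr; exact Set.sdiff_subset
  have hreal : (Q (E \ B)).toReal ≤ Real.exp a * (R E).toReal := by
    have := ENNReal.toReal_mono (ENNReal.mul_ne_top ENNReal.ofReal_ne_top (measure_ne_top R E)) hdiff
    rwa [ENNReal.toReal_mul, ENNReal.toReal_ofReal (Real.exp_pos a).le] at this
  have hunion : Q.real E ≤ Q.real (E \ B) + Q.real B :=
    (measureReal_mono (fun z hz => by by_cases h : z ∈ B <;> simp [hz, h])).trans
      (measureReal_union_le _ _)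
  exact hunion.trans (add_le_add_left hreal _)

/-- With a common support, a density with respect to Lebesgue measure turns into the density
`p / m`. -/
lemma withDensity_ratio {α : Type*} [MeasurableSpace α] (lam : Measure α) {p m : α → ℝ}
    (hp : Measurable p) (hm : Measurable m) (hm0 : ∀ x, 0 ≤ m x)
    (hsupp : Function.support p = Function.support m) :
    (lam.withDensity fun x => ENNReal.ofReal (p x)) =
      (lam.withDensity fun x => ENNReal.ofReal (m x)).withDensity
        fun x => ENNReal.ofReal (p x / m x) := by
  have hr : Measurable fun x => ENNReal.ofReal (p x / m x) := (hp.div hm).ennreal_ofReal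
  rw [← withDensity_mul _ hm.ennreal_ofReal hr]
  congr 1
  ext x
  rw [Pi.mul_apply, ← ENNReal.ofReal_mul (hm0 x)]
  by_cases h : m x = 0
  · have : p x = 0 := by
      by_contra h'
      exact (hsupp ▸ (show x ∈ Function.support p from h') : x ∈ Function.support m) h
    simp [h, this]
  · rw [mul_div_cancel₀ _ h]

/-- remote contiguity from total variation convergence and moment
bounds: let `ν_k`, `μ` be probability measures on `ℝᵈ` with the same support and
continuous Lebesgue densities `p_k`, `m`, with `ν_k → μ` in total variation. If the
first two moments (under `ν_k`) of the log-ratio `log(p_k/m)` tend to `0` and its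
fourth moment is uniformly bounded, then for every `ε > 0`,
`ν_k^k(S_k > εk) = o(k^{-2})` where `S_k = ∑_{i≤k} log(p_k(Z_i)/m(Z_i))`; consequently
`μ^k(E_k) = o(e^{-ck})` for some `c > 0` implies `ν_k^k(E_k) = o(k^{-2})`. -/
theorem stmt_17 {d : ℕ} (p : ℕ → (Fin d → ℝ) → ℝ) (m : (Fin d → ℝ) → ℝ)
    (hp_cont : ∀ k, Continuous (p k)) (hm_cont : Continuous m)
    (hp0 : ∀ k x, 0 ≤ p k x) (hm0 : ∀ x, 0 ≤ m x)
    (hsupp : ∀ k, Function.support (p k) = Function.support m)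
    (ν : ℕ → Measure (Fin d → ℝ)) (μ : Measure (Fin d → ℝ))
    (hν : ∀ k, ν k = volume.withDensity fun x => ENNReal.ofReal (p k x))
    (hμ : μ = volume.withDensity fun x => ENNReal.ofReal (m x))
    [∀ k, IsProbabilityMeasure (ν k)] [IsProbabilityMeasure μ]
    (htv : Tendsto
      (fun k =>
        ⨆ A : {s : Set (Fin d → ℝ) // MeasurableSet s},
          |(ν k A.1).toReal - (μ A.1).toReal|)
      atTop (nhds 0))
    (hint : ∀ k, Integrable (fun x => (Real.log (p k x / m x)) ^ 4) (ν k))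
    (hη1 : Tendsto (fun k => ∫ x, Real.log (p k x / m x) ∂(ν k)) atTop (nhds 0))
    (hη2 : Tendsto (fun k => ∫ x, (Real.log (p k x / m x)) ^ 2 ∂(ν k)) atTop (nhds 0))
    (hη4 : ∃ Cb : ℝ, ∀ k, ∫ x, (Real.log (p k x / m x)) ^ 4 ∂(ν k) ≤ Cb) :
    (∀ ε : ℝ, 0 < ε →
      Tendsto
        (fun k : ℕ => (k : ℝ) ^ 2 *
          ((Measure.pi fun _ : Fin k => ν k)
            {z | ε * k < ∑ i, Real.log (p k (z i) / m (z i))}).toReal)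
        atTop (nhds 0)) ∧
    (∀ E : (k : ℕ) → Set (Fin k → Fin d → ℝ), (∀ k, MeasurableSet (E k)) →
      (∃ c : ℝ, 0 < c ∧
        Tendsto
          (fun k : ℕ => Real.exp (c * k) * ((Measure.pi fun _ : Fin k => μ) (E k)).toReal)
          atTop (nhds 0)) →
      Tendsto
        (fun k : ℕ => (k : ℝ) ^ 2 * ((Measure.pi fun _ : Fin k => ν k) (E k)).toReal)
        atTop (nhds 0)) := by
  have hrm : ∀ k, Measurable fun x => p k x / m x :=
    fun k => (hp_cont k).measurable.div hm_cont.measurable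
  have tail : ∀ ε : ℝ, 0 < ε →
      Tendsto
        (fun k : ℕ => (k : ℝ) ^ 2 *
          ((Measure.pi fun _ : Fin k => ν k)
            {z | ε * k < ∑ i, Real.log (p k (z i) / m (z i))}).toReal)
        atTop (nhds 0) := by
    intro ε hε
    obtain ⟨C, hC⟩ := hη4
    have hlim : Tendsto (fun k : ℕ => 16 / ε ^ 4 *
        (8 * (C + (∫ x, Real.log (p k x / m x) ∂(ν k)) ^ 4) * (k : ℝ)⁻¹ +
          3 * (∫ x, (Real.log (p k x / m x)) ^ 2 ∂(ν k)) ^ 2)) atTop (nhds 0) := by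
      have h := (((((hη1.pow 4).const_add C).const_mul 8).mul
        (tendsto_inv_atTop_nhds_zero_nat (𝕜 := ℝ))).add
          ((hη2.pow 2).const_mul 3)).const_mul (16 / ε ^ 4)
      simpa using h
    refine tendsto_of_tendsto_of_tendsto_of_le_of_le' tendsto_const_nhds hlim
      (Eventually.of_forall fun k => by positivity) ?_
    filter_upwards [hη1.eventually (gt_mem_nhds (half_pos hε)), eventually_gt_atTop 0]
      with k hk hk0
    exact pi_tail_bound (ν k) (hrm k).log (hint k) (hC k) hε hk.le hk0
  refine ⟨tail, ?_⟩
  rintro E hE ⟨c, hc, hlim⟩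
  have hexp : Tendsto (fun k : ℕ => (k : ℝ) ^ 2 * Real.exp (-(c / 2) * k)) atTop (nhds 0) :=
    by simpa only [Function.comp_def, Real.rpow_ofNat] using
      (tendsto_rpow_mul_exp_neg_mul_atTop_nhds_zero 2 (c / 2) (half_pos hc)).comp
        tendsto_natCast_atTop_atTop
  have hmain := (hexp.mul hlim).add (tail (c / 2) (half_pos hc))
  rw [mul_zero, add_zero] at hmain
  refine squeeze_zero (fun k => by positivity) (fun k => ?_) hmain
  have hνk : ν k = μ.withDensity fun x => ENNReal.ofReal (p k x / m x) := by
    rw [hν k, hμ]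
    exact withDensity_ratio _ (hp_cont k).measurable hm_cont.measurable hm0 (hsupp k)
  have : IsProbabilityMeasure (μ.withDensity fun x => ENNReal.ofReal (p k x / m x)) := by
    rw [← hνk]; infer_instance
  have h := pi_change_of_measure μ (hrm k) (fun x => div_nonneg (hp0 k x) (hm0 x)) (hE k)
    (c / 2 * k)
  rw [← hνk] at h
  have he : Real.exp (c / 2 * k) = Real.exp (-(c / 2) * k) * Real.exp (c * k) := by
    rw [← Real.exp_add]; congr 1; ring
  calc _ ≤ (k : ℝ) ^ 2 * _ := mul_le_mul_of_nonneg_left h (by positivity)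
    _ = _ := by rw [he]; ring
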